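/- Assume s = 3, q = p, p ∤ (m/t), d | h, and a ≠ 0. Set a_0 = −(m/t)·a^{−1} ∈ F_p^*, and Q_{t,3} = p^{(t−1)/3}·π_3^{(t−1)/3}·χ̄_3(a_0)·ζ^{2·i_0} if t ≡ 1 (mod 3), Q_{t,3} = p^{(t−2)/3}·π_3^{(t+1)/3}·χ_3(a_0)·ζ^{2·i_0} if t ≡ 2 (mod 3). Then: if (d,l) = (1,1) then N_t = (1/3)·( p^{t−1} − 2·(−1)^t·Re Q_{t,3} ); if (d,l) = (1,3) then N_t = (1/3)·( p^{t−1} + 2·(−1)^t·p^{(t−3)/3}·Re(π_3^{t/3}·ζ^{2·i_0}) ); if (d,l) = (3,1) then N_t = p^{t−1}. Here the possible values of (d,l) are: (1,1) when 3 ∤ m/t and 3 ∤ t, (1,3) when 3 ∤ m/t and 3 | t, (3,1) when 3 | m/t. -/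

import Mathlib

noncomputable section

open Complex Polynomial Classical

/-- `N_t(a,s,h)`: the number of elements `x` of the subfield `F_{q^t}` of `K = F_{q^m}`
with `Tr_{K/F}(x) = a` and `N_{K/F}(x) ∈ g^h·⟨g^s⟩`. -/
def NN (F K : Type*) [Field F] [Fintype F] [Field K] [Fintype K] [Algebra F K]
    (g : F) (s h t : ℕ) (a : F) : ℕ :=
  Nat.card {x : K // x ^ (Fintype.card F) ^ t = x ∧ Algebra.trace F K x = a ∧
    ∃ k : ℕ, Algebra.norm F x = g ^ (h + s * k)}

/-!
Write `E` for the subfield `F_{q^t}` and `n = m / t`. Since trace and norm from `K` are `n • Tr_E`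
and `N_E ^ n` on `E`, the count is over the `x ∈ E` with trace `c = a / n` and `N_E(x) ^ n` in the
coset. For `3 ∣ n` the coset condition is automatic; otherwise it says `N_E(x) ∈ g ^ i₀ ⟨g ^ 3⟩`,
and orthogonality of cubic characters turns it into the sum of `χ ∘ N_E` over the trace fibre.
Additive Fourier inversion writes that sum through the Gauss sums of `E`, which Hasse–Davenport
reduces to Gauss sums of `F`, and the cube of a cubic Gauss sum is `q` times the Jacobi sum
`J(χ, χ)`.

Hasse–Davenport comes from the `L`-series of `f ↦ χ(± f(0)) ψ(- f.nextCoeff)` on monic polynomials: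
it is `1 + gaussSum χ ψ * T`, and the coefficients of its logarithmic derivative are the sums over
`E`, since a characteristic polynomial `P ^ j` comes from exactly `deg P` elements.

Finally `χ(4) J(χ, χ) = ∑ u, χ (1 - u ^ 2)`. Counting the `u` with `1 - u ^ 2` in each cubic coset,
and pairing `u` with `-u`, shows that this is `A + B i√3` with `A ≡ -1 (mod 3)`; it has norm `q`,
and replacing `χ` by its reduction `y ↦ y ^ ((q - 1) / 3)` fixes `A / B` modulo `p`, which for
`q = p` pins down `A` and `B`.
-/

section VonMangoldt

open UniqueFactorizationMonoid

variable {F : Type*} [Field F]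

/-- The von Mangoldt function of the polynomial ring `F[X]`, with the degree in the role of the
logarithm: it is `deg P` at an associate of a positive power of an irreducible `P`, and `0` at any
other polynomial. -/
def polyVonMangoldt (f : F[X]) : ℕ := if IsPrimePow f then (radical f).natDegree else 0

lemma polyVonMangoldt_pow {P : F[X]} (hP : Irreducible P) {j : ℕ} (hj : j ≠ 0) :
    polyVonMangoldt (P ^ j) = P.natDegree := by
  rw [polyVonMangoldt, if_pos (hP.prime.isPrimePow.pow hj), radical_pow_of_prime hP.prime hj,
    natDegree_eq_of_degree_eq degree_normalize]

lemma polyVonMangoldt_one : polyVonMangoldt (1 : F[X]) = 0 :=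
  if_neg not_isPrimePow_one

lemma exists_pow_eq_of_isPrimePow {f : F[X]} (hf : f.Monic) (hpp : IsPrimePow f) :
    ∃ P : F[X], ∃ j : ℕ, Irreducible P ∧ P.Monic ∧ j ≠ 0 ∧ P ^ j = f := by
  obtain ⟨P, j, hP, hj, rfl⟩ := hpp
  have hPm := monic_normalize hP.ne_zero
  exact ⟨normalize P, j, (associated_normalize P).irreducible hP.irreducible, hPm, hj.ne',
    eq_of_monic_of_associated (hPm.pow j) hf (normalize_associated P).pow_pow⟩

lemma eq_and_eq_of_pow_eq_pow {P Q : F[X]} (hP : Irreducible P) (hPm : P.Monic)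
    (hQ : Irreducible Q) (hQm : Q.Monic) {i j : ℕ} (hi : i ≠ 0) (hj : j ≠ 0)
    (h : P ^ i = Q ^ j) : P = Q ∧ i = j := by
  obtain rfl : P = Q := by
    have := congrArg radical h
    rwa [radical_pow_of_prime hP.prime hi, radical_pow_of_prime hQ.prime hj,
      hPm.normalize_eq_self, hQm.normalize_eq_self] at this
  exact ⟨rfl, pow_injective_of_not_isUnit hP.not_isUnit hP.ne_zero h⟩

lemma finite_setOf_monic_dvd {f : F[X]} (hf : f ≠ 0) : {g : F[X] | g.Monic ∧ g ∣ f}.Finite := by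
  refine (Set.finite_Iic (normalizedFactors f)).of_injOn (f := normalizedFactors) ?_ ?_
  · rintro g ⟨hg, hgf⟩
    exact (dvd_iff_normalizedFactors_le_normalizedFactors hg.ne_zero hf).1 hgf
  · rintro g ⟨hg, -⟩ g' ⟨hg', -⟩ h
    have := congrArg Multiset.prod h
    rwa [prod_normalizedFactors_eq hg.ne_zero, prod_normalizedFactors_eq hg'.ne_zero,
      hg.normalize_eq_self, hg'.normalize_eq_self] at this

/-- The monic divisors of `f`; the empty set when `f = 0`. -/
def monicDivisors (f : F[X]) : Finset F[X] :=
  if hf : f = 0 then ∅ else (finite_setOf_monic_dvd hf).toFinset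

lemma mem_monicDivisors {f g : F[X]} (hf : f ≠ 0) :
    g ∈ monicDivisors f ↔ g.Monic ∧ g ∣ f := by
  simp [monicDivisors, hf]

lemma pow_dvd_iff_le_count_normalizedFactors {P f : F[X]} (hP : Irreducible P) (hPm : P.Monic)
    (hf : f ≠ 0) (j : ℕ) : P ^ j ∣ f ↔ j ≤ (normalizedFactors f).count P := by
  rw [pow_dvd_iff_le_emultiplicity, emultiplicity_eq_count_normalizedFactors hP hf,
    hPm.normalize_eq_self, Nat.cast_le]

lemma sum_natDegree_normalizedFactors {f : F[X]} (hf : f ≠ 0) :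
    ((normalizedFactors f).map natDegree).sum = f.natDegree := by
  rw [← natDegree_multiset_prod _ (zero_notMem_normalizedFactors f),
    prod_normalizedFactors_eq hf, natDegree_eq_of_degree_eq degree_normalize]

theorem sum_polyVonMangoldt_monicDivisors {f : F[X]} (hf : f ≠ 0) :
    ∑ g ∈ monicDivisors f, polyVonMangoldt g = f.natDegree := by
  have hmem {P : F[X]} (hP : P ∈ normalizedFactors f) : Irreducible P ∧ P.Monic :=
    ⟨irreducible_of_normalized_factor P hP,
      (normalize_normalized_factor P hP) ▸ monic_normalize (ne_zero_of_mem_normalizedFactors hP)⟩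
  calc ∑ g ∈ monicDivisors f, polyVonMangoldt g
      = ∑ x ∈ (normalizedFactors f).toFinset.sigma
          fun P => Finset.Icc 1 ((normalizedFactors f).count P), x.1.natDegree := by
        refine (Finset.sum_bij_ne_zero (fun x _ _ => x.1 ^ x.2) ?_ ?_ ?_ ?_).symm
        · rintro ⟨P, j⟩ hx -
          simp only [Finset.mem_sigma, Multiset.mem_toFinset, Finset.mem_Icc] at hx
          obtain ⟨hP, hPm⟩ := hmem hx.1
          exact (mem_monicDivisors hf).2
            ⟨hPm.pow j, (pow_dvd_iff_le_count_normalizedFactors hP hPm hf j).2 hx.2.2⟩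
        · rintro ⟨P, i⟩ hx - ⟨Q, j⟩ hy - h
          simp only [Finset.mem_sigma, Multiset.mem_toFinset, Finset.mem_Icc] at hx hy h
          obtain ⟨hP, hPm⟩ := hmem hx.1
          obtain ⟨hQ, hQm⟩ := hmem hy.1
          obtain ⟨rfl, rfl⟩ := eq_and_eq_of_pow_eq_pow hP hPm hQ hQm (by omega) (by omega) h
          rfl
        · intro g hg hg0
          obtain ⟨hgm, hgf⟩ := (mem_monicDivisors hf).1 hg
          obtain ⟨P, j, hP, hPm, hj, rfl⟩ := exists_pow_eq_of_isPrimePow hgm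
            (of_not_not fun h => hg0 (if_neg h))
          have hle := (pow_dvd_iff_le_count_normalizedFactors hP hPm hf j).1 hgf
          refine ⟨⟨P, j⟩, ?_, hP.natDegree_pos.ne', rfl⟩
          simp only [Finset.mem_sigma, Multiset.mem_toFinset, Finset.mem_Icc]
          exact ⟨Multiset.one_le_count_iff_mem.1 (hj.bot_lt.trans_le hle), hj.bot_lt, hle⟩
        · rintro ⟨P, j⟩ hx -
          simp only [Finset.mem_sigma, Multiset.mem_toFinset, Finset.mem_Icc] at hx
          exact (polyVonMangoldt_pow (hmem hx.1).1 (Nat.one_le_iff_ne_zero.1 hx.2.1)).symm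
    _ = ∑ P ∈ (normalizedFactors f).toFinset, (normalizedFactors f).count P • P.natDegree := by
        simp only [Finset.sum_sigma, Finset.sum_const, Nat.card_Icc, Nat.add_sub_cancel]
    _ = f.natDegree := by
        rw [← Finset.sum_multiset_map_count, sum_natDegree_normalizedFactors hf]

end VonMangoldt

section LogDerivative

open Finset.HasAntidiagonal

variable {F : Type*} [Field F] [Finite F]

variable (F) in
lemma finite_setOf_monic_natDegree_eq (n : ℕ) : {f : F[X] | f.Monic ∧ f.natDegree = n}.Finite := by
  have : Finite (degreeLT F (n + 1)) := Finite.of_equiv _ (degreeLTEquiv F (n + 1)).symm.toEquiv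
  refine (Set.toFinite (degreeLT F (n + 1) : Set F[X])).subset ?_
  rintro f ⟨-, rfl⟩
  exact mem_degreeLT.2 (degree_le_natDegree.trans_lt (by exact_mod_cast f.natDegree.lt_succ_self))

variable (F) in
/-- The monic polynomials of degree `n` over a finite field. -/
def monicsOfDegree (n : ℕ) : Finset F[X] := (finite_setOf_monic_natDegree_eq F n).toFinset

lemma mem_monicsOfDegree {n : ℕ} {f : F[X]} :
    f ∈ monicsOfDegree F n ↔ f.Monic ∧ f.natDegree = n := by
  simp [monicsOfDegree]

lemma monicsOfDegree_zero : monicsOfDegree F 0 = {1} := by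
  ext f
  rw [mem_monicsOfDegree, Finset.mem_singleton]
  exact ⟨fun h => h.1.natDegree_eq_zero.1 h.2, fun h => h ▸ ⟨monic_one, natDegree_one⟩⟩

lemma sum_monicsOfDegree_one {F : Type*} [Field F] [Fintype F] {M : Type*} [AddCommMonoid M]
    (φ : F[X] → M) :
    ∑ f ∈ monicsOfDegree F 1, φ f = ∑ a : F, φ (X - C a) := by
  refine (Finset.sum_bij (fun a _ => X - C a) ?_ ?_ ?_ fun _ _ => rfl).symm
  · exact fun a _ => mem_monicsOfDegree.2 ⟨monic_X_sub_C a, natDegree_X_sub_C a⟩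
  · exact fun a _ b _ h => C_injective (sub_right_injective h)
  · intro f hf
    obtain ⟨hm, hd⟩ := mem_monicsOfDegree.1 hf
    exact ⟨-f.coeff 0, Finset.mem_univ _, by rw [C_neg, sub_neg_eq_add, ← hm.eq_X_add_C hd]⟩

lemma sum_monicDivisors_eq_sum_antidiagonal {M : Type*} [AddCommMonoid M] (φ : F[X] → F[X] → M)
    (n : ℕ) :
    ∑ f ∈ monicsOfDegree F n, ∑ g ∈ monicDivisors f, φ g f =
      ∑ ij ∈ antidiagonal n,
        ∑ g ∈ monicsOfDegree F ij.1, ∑ h ∈ monicsOfDegree F ij.2, φ g (g * h) := by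
  simp only [← Finset.sum_product', Finset.sum_sigma']
  symm
  refine Finset.sum_bij (fun y _ => ⟨y.2.1 * y.2.2, y.2.1⟩) ?_ ?_ ?_ fun _ _ => rfl
  · rintro ⟨⟨i, j⟩, g, h⟩ hy
    simp only [Finset.mem_sigma, mem_antidiagonal, Finset.mem_product,
      mem_monicsOfDegree] at hy ⊢
    obtain ⟨rfl, ⟨hg, rfl⟩, hh, rfl⟩ := hy
    exact ⟨⟨hg.mul hh, hg.natDegree_mul hh⟩,
      (mem_monicDivisors (hg.mul hh).ne_zero).2 ⟨hg, dvd_mul_right g h⟩⟩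
  · rintro ⟨⟨i, j⟩, g, h⟩ hy ⟨⟨i', j'⟩, g', h'⟩ hy' heq
    simp only [Finset.mem_sigma, Finset.mem_product, mem_monicsOfDegree] at hy hy'
    simp only [Sigma.mk.injEq, heq_eq_eq] at heq
    obtain ⟨-, ⟨hg, rfl⟩, -, rfl⟩ := hy
    obtain ⟨-, ⟨-, rfl⟩, -, rfl⟩ := hy'
    obtain ⟨hgh, rfl⟩ := heq
    rw [mul_left_cancel₀ hg.ne_zero hgh]
  · rintro ⟨f, g⟩ hx
    obtain ⟨hf, hgf⟩ : f ∈ monicsOfDegree F n ∧ g ∈ monicDivisors f := Finset.mem_sigma.1 hx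
    obtain ⟨hfm, rfl⟩ := mem_monicsOfDegree.1 hf
    obtain ⟨hg, h, rfl⟩ := (mem_monicDivisors hfm.ne_zero).1 hgf
    have hh : h.Monic := hg.of_mul_monic_left hfm
    refine ⟨⟨(g.natDegree, h.natDegree), g, h⟩, ?_, rfl⟩
    simp only [Finset.mem_sigma, mem_antidiagonal, Finset.mem_product, mem_monicsOfDegree]
    exact ⟨(hg.natDegree_mul hh).symm, ⟨hg, trivial⟩, hh, trivial⟩

/-- The coefficient identity behind `T · L'(T) = (T · L'(T) / L(T)) · L(T)` for the `L`-series
`L(T) = ∑ w(f) T ^ deg f` of a completely multiplicative function `w`. -/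
theorem natCast_mul_sum_monicsOfDegree {R : Type*} [CommSemiring R] {w : F[X] → R}
    (hw : ∀ f g : F[X], f.Monic → g.Monic → w (f * g) = w f * w g) (n : ℕ) :
    n * ∑ f ∈ monicsOfDegree F n, w f =
      ∑ ij ∈ antidiagonal n, (∑ g ∈ monicsOfDegree F ij.1, polyVonMangoldt g * w g) *
        ∑ h ∈ monicsOfDegree F ij.2, w h := by
  calc n * ∑ f ∈ monicsOfDegree F n, w f
      = ∑ f ∈ monicsOfDegree F n, ∑ g ∈ monicDivisors f, polyVonMangoldt g * w f := by
        rw [Finset.mul_sum]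
        refine Finset.sum_congr rfl fun f hf => ?_
        obtain ⟨hm, rfl⟩ := mem_monicsOfDegree.1 hf
        rw [← Finset.sum_mul, ← Nat.cast_sum, sum_polyVonMangoldt_monicDivisors hm.ne_zero]
    _ = _ := by
        rw [sum_monicDivisors_eq_sum_antidiagonal]
        refine Finset.sum_congr rfl fun ij _ => ?_
        rw [Finset.sum_mul_sum]
        refine Finset.sum_congr rfl fun g hg => Finset.sum_congr rfl fun h hh => ?_
        rw [hw g h (mem_monicsOfDegree.1 hg).1 (mem_monicsOfDegree.1 hh).1, mul_assoc]

end LogDerivative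

section PolyChar

variable {F R : Type*} [Field F] [CommRing R]

/-- The completely multiplicative function on monic polynomials over `F` attached to a pair of
characters, `χ ((-1)ⁿ c₀) ψ (-cₙ₋₁)` at `Xⁿ + cₙ₋₁ Xⁿ⁻¹ + ⋯ + c₀`; at a characteristic polynomial
it is `χ` of the norm times `ψ` of the trace. -/
def polyChar (χ : MulChar F R) (ψ : AddChar F R) (f : F[X]) : R :=
  χ ((-1) ^ f.natDegree * f.coeff 0) * ψ (-f.nextCoeff)

variable (χ : MulChar F R) (ψ : AddChar F R)

lemma polyChar_mul {f g : F[X]} (hf : f.Monic) (hg : g.Monic) :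
    polyChar χ ψ (f * g) = polyChar χ ψ f * polyChar χ ψ g := by
  have hcoeff : (-1) ^ (f.natDegree + g.natDegree) * (f.coeff 0 * g.coeff 0) =
      (-1) ^ f.natDegree * f.coeff 0 * ((-1) ^ g.natDegree * g.coeff 0) := by ring
  rw [polyChar, hf.natDegree_mul hg, hf.nextCoeff_mul hg, mul_coeff_zero, neg_add,
    AddChar.map_add_eq_mul, hcoeff, map_mul, mul_mul_mul_comm, polyChar, polyChar]

lemma polyChar_one : polyChar χ ψ 1 = 1 := by
  simp [polyChar, nextCoeff]

lemma polyChar_X_sub_C (a : F) : polyChar χ ψ (X - C a) = χ a * ψ a := by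
  simp [polyChar]

lemma polyChar_add_C_mul_X_pow {f : F[X]} (hf : 2 ≤ f.natDegree) (b : F) :
    polyChar χ ψ (f + C b * X ^ (f.natDegree - 1)) = ψ (-b) * polyChar χ ψ f := by
  have hd : (f + C b * X ^ (f.natDegree - 1)).natDegree = f.natDegree :=
    natDegree_add_eq_left_of_natDegree_lt
      ((natDegree_C_mul_X_pow_le b _).trans_lt (by omega))
  rw [polyChar, polyChar, nextCoeff_of_natDegree_pos (by omega),
    nextCoeff_of_natDegree_pos (by omega), hd, coeff_add, coeff_add, coeff_C_mul_X_pow,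
    coeff_C_mul_X_pow, if_pos rfl, if_neg (by omega), add_zero, neg_add_rev,
    AddChar.map_add_eq_mul, mul_left_comm]

lemma sum_polyChar_zero [Finite F] : ∑ f ∈ monicsOfDegree F 0, polyChar χ ψ f = 1 := by
  rw [monicsOfDegree_zero, Finset.sum_singleton, polyChar_one]

lemma sum_polyChar_one [Fintype F] : ∑ f ∈ monicsOfDegree F 1, polyChar χ ψ f = gaussSum χ ψ := by
  simp only [sum_monicsOfDegree_one, polyChar_X_sub_C, gaussSum]

lemma sum_polyChar_eq_zero [Finite F] [IsDomain R] {ψ : AddChar F R} (hψ : ψ ≠ 1) {n : ℕ}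
    (hn : 2 ≤ n) :
    ∑ f ∈ monicsOfDegree F n, polyChar χ ψ f = 0 := by
  obtain ⟨b, hb⟩ := AddChar.ne_one_iff.1 hψ
  have shift_mem (c : F) {f : F[X]} (hf : f ∈ monicsOfDegree F n) :
      f + C c * X ^ (n - 1) ∈ monicsOfDegree F n := by
    obtain ⟨hm, rfl⟩ := mem_monicsOfDegree.1 hf
    have hlt : (C c * X ^ (f.natDegree - 1)).natDegree < f.natDegree :=
      (natDegree_C_mul_X_pow_le c _).trans_lt (by omega)
    exact mem_monicsOfDegree.2 ⟨hm.add_of_left (degree_lt_degree hlt),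
      natDegree_add_eq_left_of_natDegree_lt hlt⟩
  have hsum : ψ b * ∑ f ∈ monicsOfDegree F n, polyChar χ ψ f =
      ∑ f ∈ monicsOfDegree F n, polyChar χ ψ f := by
    rw [Finset.mul_sum]
    refine Finset.sum_bij' (fun f _ => f + C (-b) * X ^ (n - 1)) (fun f _ => f + C b * X ^ (n - 1))
      (fun _ => shift_mem _) (fun _ => shift_mem _) ?_ ?_ ?_
    · intros; rw [C_neg]; ring
    · intros; rw [C_neg]; ring
    · intro f hf
      obtain ⟨-, rfl⟩ := mem_monicsOfDegree.1 hf
      rw [polyChar_add_C_mul_X_pow χ ψ hn, neg_neg]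
  exact (mul_left_eq_self₀.1 hsum).resolve_left hb

theorem sum_polyVonMangoldt_mul_polyChar [Fintype F] [IsDomain R] {ψ : AddChar F R} (hψ : ψ ≠ 1)
    {n : ℕ} (hn : n ≠ 0) :
    ∑ f ∈ monicsOfDegree F n, polyVonMangoldt f * polyChar χ ψ f = -(-gaussSum χ ψ) ^ n := by
  have logDeriv (n : ℕ) := natCast_mul_sum_monicsOfDegree
    (fun f g hf hg => polyChar_mul χ ψ (f := f) (g := g) hf hg) n
  induction n, Nat.one_le_iff_ne_zero.2 hn using Nat.le_induction with
  | base =>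
    have h := logDeriv 1
    rw [Finset.Nat.sum_antidiagonal_succ', Finset.Nat.antidiagonal_zero, Finset.sum_singleton] at h
    simp only [monicsOfDegree_zero, sum_polyChar_one, Finset.sum_singleton, polyVonMangoldt_one,
      polyChar_one] at h
    linear_combination -h
  | succ n hn1 ih =>
    obtain ⟨n, rfl⟩ := Nat.exists_eq_add_of_le' hn1
    have h := logDeriv (n + 2)
    have htail (j : ℕ) := sum_polyChar_eq_zero χ hψ (Nat.le_add_left 2 j)
    simp only [Finset.Nat.sum_antidiagonal_succ', htail, sum_polyChar_zero, zero_add,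
      sum_polyChar_one, ih n.succ_ne_zero, mul_zero, Finset.sum_const_zero] at h
    linear_combination -h

end PolyChar

section FieldCharpoly

open IntermediateField Module

variable {F L R : Type*} [Field F] [Field L] [Algebra F L] [FiniteDimensional F L] [CommRing R]

variable (F) in
/-- The characteristic polynomial over `F` of multiplication by `x` on `L`, as a power of the
minimal polynomial of `x`. -/
def fieldCharpoly (x : L) : F[X] := minpoly F x ^ finrank F⟮x⟯ L

lemma monic_fieldCharpoly (x : L) : (fieldCharpoly F x).Monic :=
  (minpoly.monic (Algebra.IsIntegral.isIntegral x)).pow _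

lemma natDegree_fieldCharpoly (x : L) : (fieldCharpoly F x).natDegree = finrank F L := by
  rw [fieldCharpoly, natDegree_pow, ← adjoin.finrank (Algebra.IsIntegral.isIntegral x), mul_comm,
    finrank_mul_finrank]

lemma norm_eq_coeff_zero_fieldCharpoly (x : L) :
    Algebra.norm F x = (-1) ^ (fieldCharpoly F x).natDegree * (fieldCharpoly F x).coeff 0 := by
  have hx : IsIntegral F x := Algebra.IsIntegral.isIntegral x
  have hgen := Algebra.PowerBasis.norm_gen_eq_coeff_zero_minpoly (adjoin.powerBasis hx)
  rw [adjoin.powerBasis_gen, minpoly_gen, adjoin.powerBasis_dim] at hgen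
  rw [Algebra.norm_eq_norm_adjoin, hgen, mul_pow, ← pow_mul, fieldCharpoly, natDegree_pow,
    mul_comm (finrank F⟮x⟯ L), coeff_zero_eq_eval_zero, coeff_zero_eq_eval_zero, eval_pow]

lemma trace_eq_neg_nextCoeff_fieldCharpoly (x : L) :
    Algebra.trace F L x = -(fieldCharpoly F x).nextCoeff := by
  rw [trace_eq_finrank_mul_minpoly_nextCoeff, fieldCharpoly,
    (minpoly.monic (Algebra.IsIntegral.isIntegral x)).nextCoeff_pow, nsmul_eq_mul, mul_neg]

lemma polyChar_fieldCharpoly (χ : MulChar F R) (ψ : AddChar F R) (x : L) :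
    polyChar χ ψ (fieldCharpoly F x) = χ (Algebra.norm F x) * ψ (Algebra.trace F L x) := by
  rw [polyChar, ← norm_eq_coeff_zero_fieldCharpoly, ← trace_eq_neg_nextCoeff_fieldCharpoly]

lemma isPrimePow_fieldCharpoly (x : L) : IsPrimePow (fieldCharpoly F x) :=
  (minpoly.irreducible (Algebra.IsIntegral.isIntegral x)).prime.isPrimePow.pow finrank_pos.ne'

lemma fieldCharpoly_eq_pow_iff {P : F[X]} (hP : Irreducible P) (hPm : P.Monic) {j : ℕ}
    (hj : (P ^ j).natDegree = finrank F L) (x : L) :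
    fieldCharpoly F x = P ^ j ↔ aeval x P = 0 := by
  have hmin := minpoly.irreducible (Algebra.IsIntegral.isIntegral (R := F) x)
  constructor
  · intro h
    have hdvd : minpoly F x ∣ P ^ j := h ▸ dvd_pow_self (minpoly F x) finrank_pos.ne'
    exact minpoly.dvd_iff.1 (hmin.prime.dvd_of_dvd_pow hdvd)
  · intro h
    obtain rfl := minpoly.eq_of_irreducible_of_monic hP h hPm
    have hdeg := (natDegree_fieldCharpoly (F := F) x).trans hj.symm
    rw [fieldCharpoly, natDegree_pow, natDegree_pow] at hdeg
    rw [fieldCharpoly, Nat.eq_of_mul_eq_mul_right hmin.natDegree_pos hdeg]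

end FieldCharpoly

section HasseDavenport

open Module

variable {F L R : Type*} [Field F] [Field L] [Algebra F L] [Fintype L] [CommRing R]

lemma card_filter_aeval_eq_zero [Finite F] {P : F[X]} (hP : Irreducible P)
    (hdvd : P.natDegree ∣ finrank F L) :
    (Finset.univ.filter fun x : L => aeval x P = 0).card = P.natDegree := by
  have hsplits : (P.map (algebraMap F L)).Splits := by
    have hL : Nat.card F ^ finrank F L = Fintype.card L := by
      rw [← Module.natCard_eq_pow_finrank, Nat.card_eq_fintype_card]
    refine (IsSplittingField.splits L (X ^ Fintype.card L - X : F[X])).of_dvd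
      (map_ne_zero (FiniteField.X_pow_card_sub_X_ne_zero F Fintype.one_lt_card))
      (map_dvd (mapRingHom (algebraMap F L)) ?_)
    rwa [← hL, ← hP.natDegree_dvd_iff_dvd_X_pow_card_pow_sub_X]
  rw [← card_rootSet_eq_natDegree (PerfectField.separable_of_irreducible hP) hsplits,
    ← Set.toFinset_card]
  congr 1
  ext x
  simp [mem_rootSet, hP.ne_zero]

lemma card_filter_fieldCharpoly_eq [Finite F] {f : F[X]} (hf : f.Monic)
    (hd : f.natDegree = finrank F L) :
    (Finset.univ.filter fun x : L => fieldCharpoly F x = f).card = polyVonMangoldt f := by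
  by_cases hpp : IsPrimePow f
  · obtain ⟨P, j, hP, hPm, hj, rfl⟩ := exists_pow_eq_of_isPrimePow hf hpp
    simp only [fieldCharpoly_eq_pow_iff hP hPm hd]
    rw [polyVonMangoldt_pow hP hj,
      card_filter_aeval_eq_zero hP ⟨j, by rw [← hd, natDegree_pow, mul_comm]⟩]
  · rw [polyVonMangoldt, if_neg hpp, Finset.card_eq_zero, Finset.filter_eq_empty_iff]
    rintro x - rfl
    exact hpp (isPrimePow_fieldCharpoly x)

theorem sum_mulChar_norm_mul_addChar_trace [Fintype F] [IsDomain R] (χ : MulChar F R)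
    {ψ : AddChar F R} (hψ : ψ ≠ 1) :
    ∑ x : L, χ (Algebra.norm F x) * ψ (Algebra.trace F L x) =
      -(-gaussSum χ ψ) ^ finrank F L := by
  rw [← sum_polyVonMangoldt_mul_polyChar χ hψ finrank_pos.ne',
    ← Finset.sum_fiberwise_of_maps_to (g := fieldCharpoly F)
      fun x _ => mem_monicsOfDegree.2 ⟨monic_fieldCharpoly x, natDegree_fieldCharpoly x⟩]
  refine Finset.sum_congr rfl fun f hf => ?_
  obtain ⟨hm, hd⟩ := mem_monicsOfDegree.1 hf
  rw [← card_filter_fieldCharpoly_eq hm hd, ← nsmul_eq_mul]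
  refine Finset.sum_eq_card_nsmul fun x hx => ?_
  rw [← polyChar_fieldCharpoly, (Finset.mem_filter.1 hx).2]

end HasseDavenport

section TraceFiber

open Module

variable {F : Type*} (L : Type*) {R : Type*} [Field F] [Field L] [Algebra F L] [Fintype L]

lemma sum_mulChar_norm_eq_zero [CommRing R] [IsDomain R] {χ : MulChar F R} (hχ : χ ≠ 1) :
    ∑ x : L, χ (Algebra.norm F x) = 0 := by
  have : Finite F := .of_injective _ (algebraMap F L).injective
  obtain ⟨u, hu⟩ := MulChar.ne_one_iff.1 hχ
  obtain ⟨y, hy⟩ := FiniteField.norm_surjective F L (u : F)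
  have hy0 : y ≠ 0 := fun h => u.ne_zero (by rw [← hy, h, Algebra.norm_zero])
  have hmul : χ u * ∑ x : L, χ (Algebra.norm F x) = ∑ x : L, χ (Algebra.norm F x) := by
    rw [Finset.mul_sum]
    exact Fintype.sum_bijective (y * ·) (mulLeft_bijective₀ y hy0) _ _ fun x => by
      rw [map_mul, hy, map_mul]
  exact (mul_left_eq_self₀.1 hmul).resolve_left hu

lemma card_filter_trace_eq [Fintype F] (c : F) :
    (Finset.univ.filter fun x : L => Algebra.trace F L x = c).card =
      Fintype.card F ^ (finrank F L - 1) := by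
  have hfiber (d : F) : (Finset.univ.filter fun x : L => Algebra.trace F L x = d).card =
      (Finset.univ.filter fun x : L => Algebra.trace F L x = c).card :=
    AddMonoidHom.card_fiber_eq_of_mem_range (Algebra.trace F L).toAddMonoidHom
      (Algebra.trace_surjective F L d) (Algebra.trace_surjective F L c)
  have hsum := Finset.card_eq_sum_card_fiberwise (f := Algebra.trace F L) (s := Finset.univ)
    (t := Finset.univ) fun _ _ => Finset.mem_coe.2 (Finset.mem_univ _)
  refine Nat.eq_of_mul_eq_mul_left (Fintype.card_pos (α := F)) ?_
  rw [← pow_succ', Nat.sub_add_cancel finrank_pos, ← card_eq_pow_finrank (K := F) (V := L),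
    ← Finset.card_univ (α := L), hsum, Finset.sum_congr rfl fun d _ => hfiber d, Finset.sum_const,
    Finset.card_univ, smul_eq_mul]

/-- The sum of `χ ∘ N` over the elements of `L` with trace `c`, where `N` and the trace are those of
`L / F`. -/
def traceFiberSum [CommRing R] (χ : MulChar F R) (c : F) : R :=
  ∑ x : L with Algebra.trace F L x = c, χ (Algebra.norm F x)

variable [Fintype F] [CommRing R] [IsDomain R]

lemma sum_addChar_mul_trace_sub {χ : MulChar F R} (hχ : χ ≠ 1) {ψ : AddChar F R}
    (hψ : ψ.IsPrimitive) (c y : F) :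
    ∑ x : L, ψ (y * (Algebra.trace F L x - c)) * χ (Algebra.norm F x) =
      -(-gaussSum χ ψ) ^ finrank F L * ((χ⁻¹ ^ finrank F L) y * ψ.mulShift (-c) y) := by
  have hn : finrank F L ≠ 0 := finrank_pos.ne'
  rcases eq_or_ne y 0 with rfl | hy
  · simp only [zero_mul, AddChar.map_zero_eq_one, one_mul, MulChar.map_zero, mul_zero,
      sum_mulChar_norm_eq_zero L hχ]
  · have hG : gaussSum χ (ψ.mulShift y) = χ⁻¹ y * gaussSum χ ψ :=
      gaussSum_mulShift_eq χ ψ (Units.mk0 y hy)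
    have hHD := sum_mulChar_norm_mul_addChar_trace (L := L) χ (hψ hy)
    rw [hG, ← mul_neg, mul_pow] at hHD
    calc ∑ x : L, ψ (y * (Algebra.trace F L x - c)) * χ (Algebra.norm F x)
        = ψ.mulShift (-c) y *
            ∑ x : L, χ (Algebra.norm F x) * ψ.mulShift y (Algebra.trace F L x) := by
          rw [Finset.mul_sum]
          refine Finset.sum_congr rfl fun x _ => ?_
          rw [AddChar.mulShift_apply, AddChar.mulShift_apply, mul_sub, sub_eq_neg_add,
            AddChar.map_add_eq_mul, neg_mul, mul_comm y c]
          ring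
      _ = _ := by
          rw [hHD, MulChar.pow_apply' _ hn]
          ring

theorem card_mul_traceFiberSum {χ : MulChar F R} (hχ : χ ≠ 1) {ψ : AddChar F R}
    (hψ : ψ.IsPrimitive) (c : F) :
    Fintype.card F * traceFiberSum L χ c =
      -(-gaussSum χ ψ) ^ finrank F L * gaussSum (χ⁻¹ ^ finrank F L) (ψ.mulShift (-c)) := by
  calc (Fintype.card F : R) * traceFiberSum L χ c
      = ∑ x : L, (∑ y : F, ψ (y * (Algebra.trace F L x - c))) * χ (Algebra.norm F x) := by
        rw [traceFiberSum, Finset.sum_filter, Finset.mul_sum]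
        refine Finset.sum_congr rfl fun x _ => ?_
        rw [AddChar.sum_mulShift _ hψ]
        simp only [sub_eq_zero, Nat.cast_ite, Nat.cast_zero, mul_ite, mul_zero, ite_mul, zero_mul]
    _ = ∑ y : F, ∑ x : L, ψ (y * (Algebra.trace F L x - c)) * χ (Algebra.norm F x) := by
        simp only [Finset.sum_mul]
        exact Finset.sum_comm
    _ = _ := by
        simp only [sum_addChar_mul_trace_sub L hχ hψ, ← Finset.mul_sum, gaussSum]

end TraceFiber

section CubicCharacter

open Module

variable {F R : Type*} [Field F]

lemma ne_one_of_orderOf_eq_three [CommRing R] {χ : MulChar F R} (hχ : orderOf χ = 3) : χ ≠ 1 :=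
  fun h => by simp only [h, orderOf_one, OfNat.one_ne_ofNat] at hχ

lemma pow_three_eq_one_of_orderOf [CommRing R] {χ : MulChar F R} (hχ : orderOf χ = 3) :
    χ ^ 3 = 1 :=
  hχ ▸ pow_orderOf_eq_one χ

lemma sq_eq_inv_of_orderOf_eq_three [CommRing R] {χ : MulChar F R} (hχ : orderOf χ = 3) :
    χ ^ 2 = χ⁻¹ :=
  eq_inv_of_mul_eq_one_left (pow_three_eq_one_of_orderOf hχ)

variable [Fintype F]

lemma gaussSum_pow_three [CommRing R] [IsDomain R] {χ : MulChar F R} (hχ : orderOf χ = 3)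
    {ψ : AddChar F R} (hψ : ψ.IsPrimitive) :
    gaussSum χ ψ ^ 3 = Fintype.card F * jacobiSum χ χ := by
  have h := gaussSum_pow_eq_prod_jacobiSum (χ := χ) (by omega) hψ
  have hneg : χ (-1) = 1 := MulChar.val_neg_one_eq_one_of_odd_order (by decide)
    (pow_three_eq_one_of_orderOf hχ)
  rwa [hχ, hneg, one_mul, show Finset.Ico 1 (3 - 1) = {1} from rfl, Finset.prod_singleton,
    pow_one] at h

lemma gaussSum_mul_gaussSum_inv [CommRing R] [IsDomain R] {χ : MulChar F R} (hχ : orderOf χ = 3)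
    {ψ : AddChar F R} (hψ : ψ.IsPrimitive) :
    gaussSum χ ψ * gaussSum χ⁻¹ ψ = Fintype.card F := by
  have hneg : χ⁻¹ (-1) = 1 := MulChar.val_neg_one_eq_one_of_odd_order (n := 3) (by decide) <| by
    rw [inv_pow, pow_three_eq_one_of_orderOf hχ, inv_one]
  rw [← gaussSum_mul_gaussSum_eq_card (ne_one_of_orderOf_eq_three hχ) hψ,
    ← mul_gaussSum_inv_eq_gaussSum χ⁻¹ ψ, hneg, one_mul]

variable (L : Type*) [Field L] [Algebra F L] [Fintype L] {χ : MulChar F ℂ} {c : F} {k : ℕ}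

lemma card_mul_traceFiberSum_of_ne_zero (hχ : χ ≠ 1) {ψ : AddChar F ℂ} (hψ : ψ.IsPrimitive)
    (hc : c ≠ 0) :
    Fintype.card F * traceFiberSum L χ c = -(-gaussSum χ ψ) ^ finrank F L *
      ((χ ^ finrank F L) (-c) * gaussSum (χ⁻¹ ^ finrank F L) ψ) := by
  rw [card_mul_traceFiberSum L hχ hψ, inv_pow,
    show -c = Units.mk0 (-c) (neg_ne_zero.2 hc) from rfl, gaussSum_mulShift_eq, inv_inv]

lemma traceFiberSum_of_finrank_eq_three_mul_add_one (hχ : orderOf χ = 3) (hc : c ≠ 0)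
    (hk : finrank F L = 3 * k + 1) :
    traceFiberSum L χ c =
      (-1) ^ (3 * k) * (Fintype.card F ^ k * jacobiSum χ χ ^ k * χ (-c)) := by
  set ψ := AddChar.FiniteField.primitiveChar_to_Complex F
  have hψ : ψ.IsPrimitive := AddChar.FiniteField.primitiveChar_to_Complex_isPrimitive F
  have h := card_mul_traceFiberSum_of_ne_zero L (ne_one_of_orderOf_eq_three hχ) hψ hc
  have hχk : χ ^ (3 * k + 1) = χ := by
    rw [pow_succ, pow_mul, pow_three_eq_one_of_orderOf hχ, one_pow, one_mul]
  rw [hk, inv_pow, hχk, neg_pow, pow_succ (gaussSum χ ψ), pow_mul (gaussSum χ ψ),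
    gaussSum_pow_three hχ hψ] at h
  refine mul_left_cancel₀ (Nat.cast_ne_zero.2 (Fintype.card_ne_zero (α := F))) (h.trans ?_)
  linear_combination (-1) ^ (3 * k) * (Fintype.card F * jacobiSum χ χ) ^ k * χ (-c) *
    gaussSum_mul_gaussSum_inv hχ hψ

lemma traceFiberSum_of_finrank_eq_three_mul_add_two (hχ : orderOf χ = 3) (hc : c ≠ 0)
    (hk : finrank F L = 3 * k + 2) :
    traceFiberSum L χ c =
      (-1) ^ (3 * k + 1) * (Fintype.card F ^ k * jacobiSum χ χ ^ (k + 1) * χ⁻¹ (-c)) := by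
  set ψ := AddChar.FiniteField.primitiveChar_to_Complex F
  have hψ : ψ.IsPrimitive := AddChar.FiniteField.primitiveChar_to_Complex_isPrimitive F
  have h := card_mul_traceFiberSum_of_ne_zero L (ne_one_of_orderOf_eq_three hχ) hψ hc
  have hχk : χ ^ (3 * k + 2) = χ⁻¹ := by
    rw [pow_add, pow_mul, pow_three_eq_one_of_orderOf hχ, one_pow, one_mul,
      sq_eq_inv_of_orderOf_eq_three hχ]
  have hG : gaussSum χ ψ ^ (3 * k + 2) * gaussSum χ ψ =
      (Fintype.card F * jacobiSum χ χ) ^ (k + 1) := by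
    rw [← gaussSum_pow_three hχ hψ, ← pow_mul, ← pow_succ]
    ring
  rw [hk, inv_pow, hχk, inv_inv, neg_pow] at h
  refine mul_left_cancel₀ (Nat.cast_ne_zero.2 (Fintype.card_ne_zero (α := F))) (h.trans ?_)
  linear_combination (-1) ^ (3 * k + 1) * χ⁻¹ (-c) * hG

lemma traceFiberSum_of_finrank_eq_three_mul_add_three (hχ : orderOf χ = 3) (hc : c ≠ 0)
    (hk : finrank F L = 3 * k + 3) :
    traceFiberSum L χ c =
      (-1) ^ (3 * k + 3) * (Fintype.card F ^ k * jacobiSum χ χ ^ (k + 1)) := by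
  set ψ := AddChar.FiniteField.primitiveChar_to_Complex F
  have hψ : ψ.IsPrimitive := AddChar.FiniteField.primitiveChar_to_Complex_isPrimitive F
  have hψ1 : ψ ≠ 1 := by simpa only [AddChar.mulShift_one] using hψ one_ne_zero
  have h := card_mul_traceFiberSum_of_ne_zero L (ne_one_of_orderOf_eq_three hχ) hψ hc
  have hχk : χ ^ (3 * k + 3) = 1 := by
    rw [pow_add, pow_mul, pow_three_eq_one_of_orderOf hχ, one_pow, one_mul]
  rw [hk, inv_pow, hχk, inv_one, gaussSum_one_left hψ1, neg_pow,
    MulChar.one_apply (neg_ne_zero.2 hc).isUnit, show 3 * k + 3 = 3 * (k + 1) from rfl,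
    pow_mul (gaussSum χ ψ), gaussSum_pow_three hχ hψ] at h
  refine mul_left_cancel₀ (Nat.cast_ne_zero.2 (Fintype.card_ne_zero (α := F))) (h.trans ?_)
  ring

end CubicCharacter

section PowCoset

variable {F : Type*} [Field F]

/-- The coset `g ^ h ⟨g ^ s⟩`, spelled out as in `NN`. -/
def powCoset (g : F) (s h : ℕ) : Set F :=
  {y | ∃ k : ℕ, y = g ^ (h + s * k)}

variable {g : Fˣ} {s h : ℕ}

lemma zero_notMem_powCoset : (0 : F) ∉ powCoset (g : F) s h :=
  fun ⟨_, hk⟩ => pow_ne_zero _ g.ne_zero hk.symm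

lemma map_of_mem_powCoset {Φ R : Type*} [CommRing R] [FunLike Φ F R] [MonoidHomClass Φ F R]
    (φ : Φ) (hφ : φ g ^ s = 1) {y : F}
    (hy : y ∈ powCoset (g : F) s h) : φ y = φ g ^ h := by
  obtain ⟨k, rfl⟩ := hy
  rw [map_pow, pow_add, pow_mul, hφ, one_pow, mul_one]

lemma isPrimitiveRoot_apply_orderOf {R : Type*} [CommRing R]
    (hg : ∀ u : Fˣ, u ∈ Subgroup.zpowers g) (χ : MulChar F R) :
    IsPrimitiveRoot (χ g) (orderOf χ) := by
  have hpow (n : ℕ) : χ g ^ n = 1 ↔ χ ^ n = 1 := by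
    rw [MulChar.eq_iff hg, MulChar.pow_apply_coe, MulChar.one_apply_coe]
  exact ⟨(hpow _).2 (pow_orderOf_eq_one χ), fun n hn => orderOf_dvd_of_pow_eq_one ((hpow n).1 hn)⟩

lemma orderOf_mulChar_dvd {R : Type*} [CommRing R] (hg : ∀ u : Fˣ, u ∈ Subgroup.zpowers g)
    (χ : MulChar F R) : orderOf χ ∣ orderOf g := by
  refine (isPrimitiveRoot_apply_orderOf hg χ).dvd_of_pow_eq_one _ ?_
  rw [← map_pow, ← Units.val_pow_eq_pow_val, pow_orderOf_eq_one, Units.val_one, map_one]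

variable [Finite F]

lemma pow_mem_powCoset_iff (hs : s ∣ orderOf g) {k : ℕ} :
    (g : F) ^ k ∈ powCoset (g : F) s h ↔ k ≡ h [MOD s] := by
  constructor
  · rintro ⟨i, hi⟩
    have hmod : k ≡ h + s * i [MOD orderOf g] :=
      pow_eq_pow_iff_modEq.1 (Units.ext (by simpa only [Units.val_pow_eq_pow_val] using hi))
    exact (hmod.of_dvd hs).trans (by simp only [Nat.ModEq, Nat.add_mul_mod_self_left])
  · intro hk
    have hle : h ≤ orderOf g * h := Nat.le_mul_of_pos_left h (orderOf_pos g)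
    obtain ⟨i, hi⟩ : s ∣ k + orderOf g * h - h := by
      refine (Nat.modEq_iff_dvd' (by omega)).1 (hk.symm.trans ?_)
      have := (Nat.modEq_zero_iff_dvd.2 (hs.mul_right h)).symm.add_left k
      rwa [add_zero] at this
    refine ⟨i, ?_⟩
    have hpow : (g : F) ^ orderOf g = 1 := by
      rw [← Units.val_pow_eq_pow_val, pow_orderOf_eq_one, Units.val_one]
    rw [← hi, show h + (k + orderOf g * h - h) = k + orderOf g * h by omega, pow_add, pow_mul,
      hpow, one_pow, mul_one]

lemma exists_eq_pow_of_ne_zero (hg : ∀ u : Fˣ, u ∈ Subgroup.zpowers g) {y : F} (hy : y ≠ 0) :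
    ∃ k : ℕ, y = (g : F) ^ k := by
  obtain ⟨k, hk⟩ := (Submonoid.mem_powers_iff _ _).1 (mem_powers_iff_mem_zpowers.2
    (hg (Units.mk0 y hy)))
  exact ⟨k, by rw [← Units.val_pow_eq_pow_val, hk, Units.val_mk0]⟩

lemma sum_map_eq_sum_card_powCoset {ι Φ R : Type*} [Fintype ι] [CommRing R] [FunLike Φ F R]
    [MonoidHomClass Φ F R] (hg : ∀ u : Fˣ, u ∈ Subgroup.zpowers g) (hs : s ∣ orderOf g)
    (hs0 : 0 < s) (φ : Φ) (hφ0 : φ 0 = 0) (hφ : φ g ^ s = 1) (f : ι → F) :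
    ∑ u, φ (f u) = ∑ j ∈ Finset.range s,
      ((Finset.univ.filter fun u => f u ∈ powCoset (g : F) s j).card : R) * φ g ^ j := by
  have hpoint (y : F) :
      φ y = ∑ j ∈ Finset.range s, if y ∈ powCoset (g : F) s j then φ g ^ j else 0 := by
    rcases eq_or_ne y 0 with rfl | hy
    · simp only [hφ0, zero_notMem_powCoset, if_false, Finset.sum_const_zero]
    obtain ⟨k, rfl⟩ := exists_eq_pow_of_ne_zero hg hy
    rw [Finset.sum_eq_single_of_mem (k % s) (Finset.mem_range.2 (Nat.mod_lt k hs0))]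
    · have hk : (g : F) ^ k ∈ powCoset (g : F) s (k % s) :=
        (pow_mem_powCoset_iff hs).2 (Nat.mod_modEq k s).symm
      rw [if_pos hk, map_of_mem_powCoset φ hφ hk]
    · intro j hj hjk
      refine if_neg fun hmem => hjk ?_
      exact (Nat.mod_eq_of_lt (Finset.mem_range.1 hj)).symm.trans
        ((pow_mem_powCoset_iff hs).1 hmem).symm
  simp only [hpoint (f _)]
  rw [Finset.sum_comm]
  simp only [← Finset.sum_filter, Finset.sum_const, nsmul_eq_mul]

end PowCoset

section JacobiSum

variable {F : Type*} [Field F] [Fintype F]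

lemma map_four_mul_jacobiSum_self {R : Type*} [CommRing R] (χ : MulChar F R) (h2 : (2 : F) ≠ 0) :
    χ 4 * jacobiSum χ χ = ∑ u : F, χ (1 - u ^ 2) := by
  have hinj : Function.Injective fun x : F => 1 - 2 * x := fun x y hxy =>
    mul_left_cancel₀ h2 (sub_right_injective hxy)
  rw [jacobiSum, Finset.mul_sum]
  refine Fintype.sum_bijective _ (Finite.injective_iff_bijective.1 hinj) _ _ fun x => ?_
  rw [← map_mul, ← map_mul]
  ring_nf

lemma sum_one_sub_sq_pow_eq_zero {e : ℕ} (he : 2 * e < Fintype.card F - 1) :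
    ∑ u : F, (1 - u ^ 2) ^ e = 0 := by
  have hexpand (u : F) : (1 - u ^ 2) ^ e = ∑ i ∈ Finset.range (2 * e + 1),
      ((1 - X ^ 2 : F[X]) ^ e).coeff i * u ^ i := by
    have hdeg : ((1 - X ^ 2 : F[X]) ^ e).natDegree < 2 * e + 1 := by
      refine Nat.lt_succ_of_le (natDegree_pow_le.trans ?_)
      rw [mul_comm]
      exact Nat.mul_le_mul_right e (by compute_degree)
    rw [← eval_eq_sum_range' hdeg, eval_pow, eval_sub, eval_one, eval_pow, eval_X]
  simp only [hexpand]
  rw [Finset.sum_comm]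
  refine Finset.sum_eq_zero fun i hi => ?_
  have hi' := Finset.mem_range.1 hi
  rw [← Finset.mul_sum, FiniteField.sum_pow_lt_card_sub_one F i (by omega), mul_zero]

/-- The number of `u` with `1 - u ^ 2` in the coset `g ^ j ⟨g ^ s⟩`. -/
def oneSubSqCount (g : F) (s j : ℕ) : ℕ :=
  (Finset.univ.filter fun u : F => 1 - u ^ 2 ∈ powCoset g s j).card

lemma even_oneSubSqCount (h2 : (2 : F) ≠ 0) {g : Fˣ} {s j : ℕ} (hs : s ∣ orderOf g) (hj0 : 0 < j)
    (hjs : j < s) : Even (oneSubSqCount (g : F) s j) := by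
  rw [oneSubSqCount, ← ZMod.natCast_eq_zero_iff_even, Finset.card_eq_sum_ones, Nat.cast_sum]
  refine Finset.sum_involution (fun u _ => -u) (fun _ _ => by decide) ?_ ?_ fun u _ => neg_neg u
  · intro u hu _ hneg
    have hu0 : u = 0 := by
      refine (mul_eq_zero.1 (?_ : 2 * u = 0)).resolve_left h2
      linear_combination -hneg
    have hmem := (Finset.mem_filter.1 hu).2
    rw [hu0, zero_pow two_ne_zero, sub_zero, ← pow_zero (g : F), pow_mem_powCoset_iff hs] at hmem
    exact hj0.ne (by rwa [Nat.ModEq, Nat.zero_mod, Nat.mod_eq_of_lt hjs] at hmem)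
  · intro u hu
    simpa only [Finset.mem_filter, Finset.mem_univ, neg_sq] using hu

lemma sum_oneSubSqCount (h2 : (2 : F) ≠ 0) {g : Fˣ} (hg : ∀ u : Fˣ, u ∈ Subgroup.zpowers g)
    {s : ℕ} (hs : s ∣ orderOf g) (hs0 : 0 < s) :
    ∑ j ∈ Finset.range s, (oneSubSqCount (g : F) s j : ℤ) = Fintype.card F - 2 := by
  have hzero : (Finset.univ.filter fun u : F => 1 - u ^ 2 = 0) = {1, -1} := by
    ext u
    rw [Finset.mem_filter, and_iff_right (Finset.mem_univ u), Finset.mem_insert,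
      Finset.mem_singleton, sub_eq_zero, eq_comm, sq_eq_one_iff]
  have hne : (1 : F) ≠ -1 := fun h => h2 (by linear_combination h)
  have hcard := Finset.card_filter_add_card_filter_not (s := Finset.univ)
    fun u : F => 1 - u ^ 2 = 0
  rw [hzero, Finset.card_pair hne, Finset.card_univ] at hcard
  have hnorm : (1 : MulChar F ℤ) g ^ s = 1 := by rw [MulChar.one_apply g.isUnit, one_pow]
  have hunit (u : F) : (1 : MulChar F ℤ) (1 - u ^ 2) = if ¬ 1 - u ^ 2 = 0 then 1 else 0 := by
    split_ifs with hu
    · rw [hu, MulChar.map_zero]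
    · exact MulChar.one_apply (Ne.isUnit hu)
  have htriv := sum_map_eq_sum_card_powCoset hg hs hs0 (1 : MulChar F ℤ) (MulChar.map_zero _)
    hnorm fun u => 1 - u ^ 2
  simp only [hunit, Finset.sum_boole, MulChar.one_apply g.isUnit, one_pow, mul_one] at htriv
  simp only [oneSubSqCount, ← htriv, ← hcard]
  push_cast
  ring

variable {g : Fˣ}

lemma orderOf_eq_card_sub_one (hg : ∀ u : Fˣ, u ∈ Subgroup.zpowers g) :
    orderOf g = Fintype.card F - 1 := by
  rw [orderOf_eq_card_of_forall_mem_zpowers hg, Nat.card_eq_fintype_card, Fintype.card_units]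

lemma isPrimitiveRoot_pow_card_sub_one_div {n : ℕ} (hg : ∀ u : Fˣ, u ∈ Subgroup.zpowers g)
    (hn : n ∣ Fintype.card F - 1) :
    IsPrimitiveRoot ((g : F) ^ ((Fintype.card F - 1) / n)) n := by
  have hq : 1 < Fintype.card F := Fintype.one_lt_card
  refine IsPrimitiveRoot.pow (by omega) ?_ (Nat.div_mul_cancel hn).symm
  rw [← orderOf_eq_card_sub_one hg]
  exact (IsPrimitiveRoot.orderOf g).map_of_injective (f := Units.coeHom F) Units.val_injective

lemma one_add_self_add_sq_eq_zero {R : Type*} [CommRing R] [IsDomain R] {ζ : R}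
    (hζ : IsPrimitiveRoot ζ 3) : 1 + ζ + ζ ^ 2 = 0 := by
  simpa only [Finset.sum_range_succ, Finset.sum_range_zero, zero_add, pow_zero, pow_one] using
    hζ.geom_sum_eq_zero (by norm_num)

lemma sum_map_one_sub_sq {Φ R : Type*} [CommRing R] [FunLike Φ F R] [MonoidHomClass Φ F R]
    (hg : ∀ u : Fˣ, u ∈ Subgroup.zpowers g) (hg3 : 3 ∣ orderOf g) {φ : Φ} (hφ0 : φ 0 = 0)
    (hφ : 1 + φ g + φ g ^ 2 = 0) {n c₁ c₂ : ℕ} (hn : oneSubSqCount (g : F) 3 0 = n)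
    (hc₁ : oneSubSqCount (g : F) 3 1 = c₁ + c₁) (hc₂ : oneSubSqCount (g : F) 3 2 = c₂ + c₂) :
    ∑ u : F, φ (1 - u ^ 2) = (n - c₁ - c₂ : ℤ) + (c₁ - c₂ : ℤ) * (1 + 2 * φ g) := by
  have hφ3 : φ g ^ 3 = 1 := by linear_combination (φ g - 1) * hφ
  rw [sum_map_eq_sum_card_powCoset hg hg3 (by norm_num) φ hφ0 hφ3 fun u => 1 - u ^ 2]
  simp only [oneSubSqCount] at hn hc₁ hc₂
  simp only [Finset.sum_range_succ, Finset.sum_range_zero, hn, hc₁, hc₂]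
  push_cast
  linear_combination 2 * (c₂ : R) * hφ

lemma map_four_mul_jacobiSum_mul_inv {χ : MulChar F ℂ} (hχ : orderOf χ = 3)
    (h2 : (2 : F) ≠ 0) :
    (χ 4 * jacobiSum χ χ) * (χ⁻¹ 4 * jacobiSum χ⁻¹ χ⁻¹) = Fintype.card F := by
  have hne := ne_one_of_orderOf_eq_three hχ
  have hsq : χ * χ ≠ 1 := by
    rw [← sq, sq_eq_inv_of_orderOf_eq_three hχ]
    exact inv_ne_one.2 hne
  have hchar : ringChar ℂ ≠ ringChar F := by
    rw [ringChar.eq_zero]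
    exact (CharP.ringChar_ne_zero_of_finite F).symm
  have h4 : χ 4 * χ⁻¹ 4 = 1 := by
    have : (4 : F) ≠ 0 := by
      rw [show (4 : F) = 2 * 2 by norm_num]
      exact mul_ne_zero h2 h2
    rw [← MulChar.mul_apply, mul_inv_cancel, MulChar.one_apply this.isUnit]
  rw [mul_mul_mul_comm, h4, one_mul, jacobiSum_mul_jacobiSum_inv hchar hne hne hsq]

theorem exists_map_four_mul_jacobiSum_eq {χ : MulChar F ℂ} (hχ : orderOf χ = 3)
    (h2 : (2 : F) ≠ 0) (hg : ∀ u : Fˣ, u ∈ Subgroup.zpowers g) :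
    ∃ A B : ℤ, A ≡ -1 [ZMOD 3] ∧ A ^ 2 + 3 * B ^ 2 = Fintype.card F ∧
      (A : F) + B * (1 + 2 * (g : F) ^ ((Fintype.card F - 1) / 3)) = 0 ∧
      χ 4 * jacobiSum χ χ = A + B * (1 + 2 * χ g) := by
  have h3 : 3 ∣ Fintype.card F - 1 := hχ ▸ χ.orderOf_dvd_card_sub_one
  have hq : 1 < Fintype.card F := Fintype.one_lt_card
  have hord := orderOf_eq_card_sub_one hg
  have hg3 : 3 ∣ orderOf g := hord ▸ h3
  obtain ⟨c₁, hc₁⟩ := even_oneSubSqCount h2 hg3 (j := 1) (by norm_num) (by norm_num)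
  obtain ⟨c₂, hc₂⟩ := even_oneSubSqCount h2 hg3 (j := 2) (by norm_num) (by norm_num)
  obtain ⟨n, hn⟩ : ∃ n, oneSubSqCount (g : F) 3 0 = n := ⟨_, rfl⟩
  have hχg : IsPrimitiveRoot (χ g) 3 := hχ ▸ isPrimitiveRoot_apply_orderOf hg χ
  have hζ := one_add_self_add_sq_eq_zero hχg
  have hζinv : χ⁻¹ g = χ g ^ 2 := by
    rw [← sq_eq_inv_of_orderOf_eq_three hχ, MulChar.pow_apply_coe]
  have hJ := (map_four_mul_jacobiSum_self χ h2).trans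
    (sum_map_one_sub_sq hg hg3 (MulChar.map_zero χ) hζ hn hc₁ hc₂)
  have hJinv := (map_four_mul_jacobiSum_self χ⁻¹ h2).trans
    (sum_map_one_sub_sq hg hg3 (MulChar.map_zero χ⁻¹)
      (by rw [hζinv]; linear_combination (χ g ^ 2 - χ g + 1) * hζ) hn hc₁ hc₂)
  refine ⟨n - c₁ - c₂, c₁ - c₂, ?_, ?_, ?_, hJ⟩
  · have hcount := sum_oneSubSqCount h2 hg hg3 (by norm_num)
    simp only [Finset.sum_range_succ, Finset.sum_range_zero, hn, hc₁, hc₂] at hcount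
    unfold Int.ModEq
    omega
  · have hnorm := map_four_mul_jacobiSum_mul_inv hχ h2
    rw [hJ, hJinv, hζinv] at hnorm
    generalize (n - c₁ - c₂ : ℤ) = A, (c₁ - c₂ : ℤ) = B at hnorm ⊢
    have : ((A ^ 2 + 3 * B ^ 2 : ℤ) : ℂ) = Fintype.card F := by
      rw [← hnorm]
      push_cast
      linear_combination (-2 * A * B - 4 * B ^ 2 * χ g + 2 * B ^ 2) * hζ
    exact_mod_cast this
  · have hγ := one_add_self_add_sq_eq_zero (isPrimitiveRoot_pow_card_sub_one_div hg h3)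
    exact (sum_map_one_sub_sq (φ := powMonoidHom (α := F) ((Fintype.card F - 1) / 3)) hg hg3
      (zero_pow (by omega)) hγ hn hc₁ hc₂).symm.trans (sum_one_sub_sq_pow_eq_zero (by omega))

lemma eq_and_eq_of_sq_add_three_mul_sq_eq {A B a b n : ℤ} (hn : 0 < n)
    (hAB : A ^ 2 + 3 * B ^ 2 = n) (hab : a ^ 2 + 3 * b ^ 2 = n) (hA : A ≡ -1 [ZMOD 3])
    (ha : a ≡ -1 [ZMOD 3]) (hdvd : n ∣ A * b - a * B) : A = a ∧ B = b := by
  obtain ⟨c, hc⟩ := hdvd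
  have hnorm : (A * a + 3 * B * b) ^ 2 + 3 * (n * c) ^ 2 = n ^ 2 := by
    rw [← hc, sq n]
    nth_rw 1 [← hAB]
    rw [← hab]
    ring
  have hc0 : c = 0 := by
    by_contra hne
    have : 0 < c ^ 2 := by positivity
    nlinarith [sq_nonneg (A * a + 3 * B * b), pow_pos hn 2]
  have hcross : A * b = a * B := by linarith [hc0 ▸ hc]
  have hsq : A ^ 2 = a ^ 2 := mul_right_cancel₀ hn.ne' <| by
    linear_combination -A ^ 2 * hab + a ^ 2 * hAB + 3 * (A * b + a * B) * hcross
  unfold Int.ModEq at hA ha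
  obtain rfl : A = a := (sq_eq_sq_iff_eq_or_eq_neg.1 hsq).resolve_right (by omega)
  exact ⟨rfl, (mul_left_cancel₀ (by omega) hcross).symm⟩

lemma one_add_two_mul_exp_eq :
    1 + 2 * Complex.exp (2 * Real.pi * Complex.I / 3) = Complex.I * (Real.sqrt 3 : ℂ) := by
  have h : (2 * Real.pi * Complex.I / 3 : ℂ) = ((Real.pi - Real.pi / 3 : ℝ) : ℂ) * Complex.I := by
    push_cast
    ring
  rw [h, Complex.exp_mul_I, ← Complex.ofReal_cos, ← Complex.ofReal_sin, Real.cos_pi_sub,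
    Real.sin_pi_sub, Real.cos_pi_div_three, Real.sin_pi_div_three]
  push_cast
  ring

theorem jacobiSum_eq_of_sq_add_three_mul_sq {p : ℕ} [Fact p.Prime] {g : (ZMod p)ˣ}
    (hg : ∀ u : (ZMod p)ˣ, u ∈ Subgroup.zpowers g) {χ : MulChar (ZMod p) ℂ} (hχ : orderOf χ = 3)
    (hχg : χ g = Complex.exp (2 * Real.pi * Complex.I / 3)) {a b : ℤ}
    (hab : a ^ 2 + 3 * b ^ 2 = p) (ha : a ≡ -1 [ZMOD 3])
    (hb : ((3 * b : ℤ) : ZMod p) = (2 * (g : ZMod p) ^ ((p - 1) / 3) + 1) * a) :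
    jacobiSum χ χ = χ 2 * (a + Complex.I * b * (Real.sqrt 3 : ℂ)) := by
  have hp : p.Prime := Fact.out
  have h3p : 3 ∣ p - 1 := by
    simpa only [hχ, ZMod.card] using χ.orderOf_dvd_card_sub_one
  have h2 : (2 : ZMod p) ≠ 0 := fun h => by
    have h2p : p ∣ 2 := (ZMod.natCast_eq_zero_iff 2 p).1 (by exact_mod_cast h)
    obtain rfl := (Nat.prime_dvd_prime_iff_eq hp Nat.prime_two).1 h2p
    omega
  have h3 : IsCoprime (p : ℤ) 3 := by
    refine Nat.isCoprime_iff_coprime.2 ((Nat.coprime_primes hp Nat.prime_three).2 ?_)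
    have := hp.two_le
    omega
  obtain ⟨A, B, hA, hAB, hmod, hJ⟩ := exists_map_four_mul_jacobiSum_eq hχ h2 hg
  rw [ZMod.card] at hAB hmod
  have hdvd : (p : ℤ) ∣ A * b - a * B := by
    refine h3.dvd_of_dvd_mul_left ((ZMod.intCast_zmod_eq_zero_iff_dvd _ p).1 ?_)
    have hγ : IsPrimitiveRoot ((g : ZMod p) ^ ((p - 1) / 3)) 3 := by
      simpa only [ZMod.card] using isPrimitiveRoot_pow_card_sub_one_div hg (by rwa [ZMod.card])
    push_cast at hb ⊢
    linear_combination A * hb + (1 + 2 * (g : ZMod p) ^ ((p - 1) / 3)) * a * hmod -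
      4 * B * a * one_add_self_add_sq_eq_zero hγ
  obtain ⟨rfl, rfl⟩ :=
    eq_and_eq_of_sq_add_three_mul_sq_eq (by exact_mod_cast hp.pos) hAB hab hA ha hdvd
  have hχ8 : χ 2 * χ 4 = 1 := by
    rw [show (4 : ZMod p) = 2 ^ 2 by norm_num, map_pow, ← pow_succ',
      ← MulChar.pow_apply' χ three_ne_zero, pow_three_eq_one_of_orderOf hχ,
      MulChar.one_apply h2.isUnit]
  calc jacobiSum χ χ = χ 2 * (χ 4 * jacobiSum χ χ) := by rw [← mul_assoc, hχ8, one_mul]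
    _ = _ := by
      rw [hJ, hχg, one_add_two_mul_exp_eq]
      ring

end JacobiSum

section FrobeniusFixedField

open Module

variable (F K : Type*) [Field F] [Fintype F] [Field K] [Fintype K] [Algebra F K] {t : ℕ}

/-- The subfield `F_{q^t}` of `K`, as the fixed field of the `t`-th power of the `q`-Frobenius. -/
def frobeniusFixedField (t : ℕ) : IntermediateField F K :=
  IntermediateField.fixedField
    (Subgroup.zpowers (FiniteField.frobeniusAlgEquivOfAlgebraic F K ^ t))

variable {F K}

lemma mem_frobeniusFixedField {x : K} :
    x ∈ frobeniusFixedField F K t ↔ x ^ Fintype.card F ^ t = x := by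
  have hpow : (FiniteField.frobeniusAlgEquivOfAlgebraic F K ^ t) x = x ^ Fintype.card F ^ t := by
    rw [AlgEquiv.coe_pow, FiniteField.coe_frobeniusAlgEquivOfAlgebraic_iterate]
  rw [frobeniusFixedField, IntermediateField.mem_fixedField_iff, ← hpow]
  refine ⟨fun h => h _ (Subgroup.mem_zpowers _), fun h σ hσ => ?_⟩
  have hle : Subgroup.zpowers (FiniteField.frobeniusAlgEquivOfAlgebraic F K ^ t) ≤
      MulAction.stabilizer Gal(K/F) x :=
    Subgroup.zpowers_le.2 h
  exact hle hσ

lemma finrank_frobeniusFixedField_right (ht : t ∣ finrank F K) :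
    finrank (frobeniusFixedField F K t) K = finrank F K / t := by
  have ht0 : t ≠ 0 := ne_zero_of_dvd_ne_zero finrank_pos.ne' ht
  rw [frobeniusFixedField, IntermediateField.finrank_fixedField_eq_card, Nat.card_zpowers,
    orderOf_pow_of_dvd ht0 (by rwa [FiniteField.orderOf_frobeniusAlgEquivOfAlgebraic]),
    FiniteField.orderOf_frobeniusAlgEquivOfAlgebraic]

lemma finrank_frobeniusFixedField (ht : t ∣ finrank F K) :
    finrank F (frobeniusFixedField F K t) = t := by
  refine Nat.eq_of_mul_eq_mul_right (m := finrank F K / t) ?_ ?_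
  · exact Nat.div_pos (Nat.le_of_dvd finrank_pos ht) (Nat.pos_of_dvd_of_pos ht finrank_pos)
  · rw [Nat.mul_div_cancel' ht]
    nth_rw 2 [← finrank_mul_finrank F (frobeniusFixedField F K t) K]
    rw [finrank_frobeniusFixedField_right ht]

lemma NN_eq_card_frobeniusFixedField (ht : t ∣ finrank F K)
    (hn : ((finrank F K / t : ℕ) : F) ≠ 0) (g : F) (s h : ℕ) (a : F) :
    NN F K g s h t a = Nat.card {x : frobeniusFixedField F K t //
      Algebra.trace F _ x = a * ((finrank F K / t : ℕ) : F)⁻¹ ∧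
        Algebra.norm F x ^ (finrank F K / t) ∈ powCoset g s h} := by
  set E := frobeniusFixedField F K t
  have hrank := finrank_frobeniusFixedField_right ht
  have htrace (x : E) :
      Algebra.trace F K x = (finrank F K / t : ℕ) * Algebra.trace F E x := by
    rw [← Algebra.trace_trace (S := E), ← IntermediateField.algebraMap_apply,
      Algebra.trace_algebraMap, hrank, map_nsmul, nsmul_eq_mul]
  have hnorm (x : E) : Algebra.norm F (x : K) = Algebra.norm F x ^ (finrank F K / t) := by
    rw [← Algebra.norm_norm (S := E), ← IntermediateField.algebraMap_apply,
      Algebra.norm_algebraMap, hrank, map_pow]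
  refine Nat.card_congr (Equiv.trans (Equiv.trans (Equiv.subtypeEquivRight fun x => ?_)
    (Equiv.subtypeSubtypeEquivSubtypeInter (· ∈ E) fun x =>
      Algebra.trace F K x = a ∧ Algebra.norm F x ∈ powCoset g s h).symm)
    (Equiv.subtypeEquivRight fun x => ?_))
  · exact and_congr_left' mem_frobeniusFixedField.symm
  · rw [htrace, hnorm, eq_mul_inv_iff_mul_eq₀ hn, mul_comm]

end FrobeniusFixedField

section Counting

open Module ComplexConjugate

lemma one_add_self_add_conj {w : ℂ} (hw : w ^ 3 = 1) :
    1 + w + conj w = if w = 1 then 3 else 0 := by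
  have hconj : conj w = w ^ 2 := by
    rw [← Complex.inv_eq_conj (Complex.norm_eq_one_of_pow_eq_one hw three_ne_zero)]
    exact inv_eq_of_mul_eq_one_right (by rw [← pow_succ', hw])
  split_ifs with h
  · rw [h, map_one]
    norm_num
  · rw [hconj]
    refine (mul_eq_zero.1 (?_ : (w - 1) * (1 + w + w ^ 2) = 0)).resolve_left (sub_ne_zero.2 h)
    linear_combination hw

variable {F : Type*} [Field F] {g : Fˣ} {χ : MulChar F ℂ} {c : F} {n h i₀ : ℕ}

lemma pow_mem_powCoset_iff_mulChar_mul_eq_one [Finite F] (hg : ∀ u : Fˣ, u ∈ Subgroup.zpowers g)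
    (hχ : orderOf χ = 3) (hn : n.Coprime 3) (hi₀ : n * i₀ ≡ h [MOD 3]) {y : F} (hy : y ≠ 0) :
    y ^ n ∈ powCoset (g : F) 3 h ↔ χ g ^ (2 * i₀) * χ y = 1 := by
  obtain ⟨k, rfl⟩ := exists_eq_pow_of_ne_zero hg hy
  have hζ : IsPrimitiveRoot (χ g) 3 := hχ ▸ isPrimitiveRoot_apply_orderOf hg χ
  rw [← pow_mul, pow_mem_powCoset_iff (hχ ▸ orderOf_mulChar_dvd hg χ), map_pow, ← pow_add,
    hζ.pow_eq_one_iff_dvd]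
  have hcancel : k * n ≡ h [MOD 3] ↔ k ≡ i₀ [MOD 3] := by
    refine ⟨fun hk => Nat.ModEq.cancel_left_of_coprime (Nat.coprime_comm.1 hn) ?_, fun hk => ?_⟩
    · exact (mul_comm n k ▸ hk).trans hi₀.symm
    · exact mul_comm n k ▸ (hk.mul_left n).trans hi₀
  rw [hcancel, Nat.ModEq]
  omega

lemma norm_ne_zero_of_trace_ne_zero {L : Type*} [Field L] [Algebra F L] [FiniteDimensional F L]
    {x : L} (hx : Algebra.trace F L x ≠ 0) : Algebra.norm F x ≠ 0 :=
  Algebra.norm_ne_zero_iff.2 fun h => hx (by rw [h, map_zero])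

variable [Fintype F] (L : Type*) [Field L] [Algebra F L]

theorem card_trace_norm_pow_of_coprime [Fintype L] (hg : ∀ u : Fˣ, u ∈ Subgroup.zpowers g)
    (hχ : orderOf χ = 3) (hn : n.Coprime 3) (hi₀ : n * i₀ ≡ h [MOD 3]) (hc : c ≠ 0) :
    (Nat.card {x : L // Algebra.trace F L x = c ∧
      Algebra.norm F x ^ n ∈ powCoset (g : F) 3 h} : ℂ) =
      1 / 3 * ((Fintype.card F : ℂ) ^ (finrank F L - 1) +
        2 * ((χ g ^ (2 * i₀) * traceFiberSum L χ c).re : ℂ)) := by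
  set w : L → ℂ := fun x => χ g ^ (2 * i₀) * χ (Algebra.norm F x)
  have hpoint (x : L) (hx : Algebra.trace F L x = c) :
      (if Algebra.norm F x ^ n ∈ powCoset (g : F) 3 h then 3 else 0) = 1 + w x + conj (w x) := by
    have hN : Algebra.norm F x ≠ 0 := norm_ne_zero_of_trace_ne_zero (hx ▸ hc)
    have hw : w x ^ 3 = 1 := by
      have hχ3 (y : F) (hy : y ≠ 0) : χ y ^ 3 = 1 := by
        rw [← MulChar.pow_apply' _ three_ne_zero, pow_three_eq_one_of_orderOf hχ,
          MulChar.one_apply hy.isUnit]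
      rw [mul_pow, pow_right_comm, hχ3 _ g.ne_zero, one_pow, hχ3 _ hN, one_mul]
    simp only [pow_mem_powCoset_iff_mulChar_mul_eq_one hg hχ hn hi₀ hN,
      one_add_self_add_conj hw, w]
  have hsum : ∑ x : L with Algebra.trace F L x = c, w x =
      χ g ^ (2 * i₀) * traceFiberSum L χ c := by
    rw [traceFiberSum, Finset.mul_sum]
  have hcount : 3 * (Nat.card {x : L // Algebra.trace F L x = c ∧
      Algebra.norm F x ^ n ∈ powCoset (g : F) 3 h} : ℂ) =
      ∑ x : L with Algebra.trace F L x = c, (1 + w x + conj (w x)) := by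
    rw [Nat.card_eq_fintype_card, Fintype.card_subtype, ← Finset.filter_filter,
      Finset.natCast_card_filter, Finset.mul_sum]
    refine Finset.sum_congr rfl fun x hx => ?_
    rw [← hpoint x (Finset.mem_filter.1 hx).2, mul_ite, mul_one, mul_zero]
  rw [Finset.sum_add_distrib, Finset.sum_add_distrib, ← map_sum, hsum, add_assoc,
    Complex.add_conj, Finset.sum_const, card_filter_trace_eq] at hcount
  push_cast at hcount
  linear_combination 1 / 3 * hcount

theorem card_trace_norm_pow_of_dvd [Finite L] (hg : ∀ u : Fˣ, u ∈ Subgroup.zpowers g)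
    {s : ℕ} (hs : s ∣ orderOf g) (hn : s ∣ n) (hh : s ∣ h) (hc : c ≠ 0) :
    Nat.card {x : L // Algebra.trace F L x = c ∧ Algebra.norm F x ^ n ∈ powCoset (g : F) s h} =
      Fintype.card F ^ (finrank F L - 1) := by
  have := Fintype.ofFinite L
  rw [← card_filter_trace_eq L c, Nat.card_eq_fintype_card, Fintype.card_subtype]
  refine congrArg Finset.card (Finset.filter_congr fun x _ => and_iff_left_of_imp fun hx => ?_)
  obtain ⟨k, hk⟩ := exists_eq_pow_of_ne_zero hg (norm_ne_zero_of_trace_ne_zero (hx ▸ hc))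
  rw [hk, ← pow_mul, pow_mem_powCoset_iff hs]
  exact (Nat.modEq_zero_iff_dvd.2 (hn.mul_left k)).trans (Nat.modEq_zero_iff_dvd.2 hh).symm

end Counting

section MainTheorem

open Module

variable {F K : Type*} [Field F] [Fintype F] [Field K] [Fintype K] [Algebra F K] {g : Fˣ}
  {χ : MulChar F ℂ} {a : F} {h t i₀ k : ℕ}

lemma re_neg_one_pow_mul (n : ℕ) (z : ℂ) : (((-1) ^ n * z).re : ℂ) = (-1) ^ n * (z.re : ℂ) := by
  rcases neg_one_pow_eq_or ℂ n with hn | hn <;> simp [hn]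

theorem NN_of_coprime (hg : ∀ u : Fˣ, u ∈ Subgroup.zpowers g) (hχ : orderOf χ = 3)
    (ht : t ∣ finrank F K) (hF : ((finrank F K / t : ℕ) : F) ≠ 0)
    (hn : (finrank F K / t).Coprime 3) (hi₀ : finrank F K / t * i₀ ≡ h [MOD 3]) (ha : a ≠ 0) :
    (NN F K g 3 h t a : ℂ) = 1 / 3 * ((Fintype.card F : ℂ) ^ (t - 1) +
      2 * ((χ g ^ (2 * i₀) * traceFiberSum (frobeniusFixedField F K t) χ
        (a * ((finrank F K / t : ℕ) : F)⁻¹)).re : ℂ)) := by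
  rw [NN_eq_card_frobeniusFixedField ht hF, card_trace_norm_pow_of_coprime _ hg hχ hn hi₀
    (mul_ne_zero ha (inv_ne_zero hF)), finrank_frobeniusFixedField ht]

theorem NN_of_coprime_of_mod_three_eq_one (hg : ∀ u : Fˣ, u ∈ Subgroup.zpowers g)
    (hχ : orderOf χ = 3) (ht : t ∣ finrank F K) (hF : ((finrank F K / t : ℕ) : F) ≠ 0)
    (hn : (finrank F K / t).Coprime 3) (hi₀ : finrank F K / t * i₀ ≡ h [MOD 3]) (ha : a ≠ 0)
    (htk : t = 3 * k + 1) :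
    (NN F K g 3 h t a : ℂ) = 1 / 3 * ((Fintype.card F : ℂ) ^ (t - 1) - 2 * (-1) ^ t *
      ((Fintype.card F ^ k * jacobiSum χ χ ^ k *
        χ⁻¹ (-((finrank F K / t : ℕ) : F) * a⁻¹) * χ g ^ (2 * i₀)).re : ℂ)) := by
  rw [NN_of_coprime hg hχ ht hF hn hi₀ ha,
    traceFiberSum_of_finrank_eq_three_mul_add_one _ hχ (mul_ne_zero ha (inv_ne_zero hF))
      ((finrank_frobeniusFixedField ht).trans htk),
    MulChar.inv_apply', mul_inv, inv_inv, inv_neg, neg_mul, mul_comm _ a,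
    mul_left_comm, re_neg_one_pow_mul, mul_comm (χ g ^ _), htk, pow_succ (-1 : ℂ)]
  ring

theorem NN_of_coprime_of_mod_three_eq_two (hg : ∀ u : Fˣ, u ∈ Subgroup.zpowers g)
    (hχ : orderOf χ = 3) (ht : t ∣ finrank F K) (hF : ((finrank F K / t : ℕ) : F) ≠ 0)
    (hn : (finrank F K / t).Coprime 3) (hi₀ : finrank F K / t * i₀ ≡ h [MOD 3]) (ha : a ≠ 0)
    (htk : t = 3 * k + 2) :
    (NN F K g 3 h t a : ℂ) = 1 / 3 * ((Fintype.card F : ℂ) ^ (t - 1) - 2 * (-1) ^ t *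
      ((Fintype.card F ^ k * jacobiSum χ χ ^ (k + 1) *
        χ (-((finrank F K / t : ℕ) : F) * a⁻¹) * χ g ^ (2 * i₀)).re : ℂ)) := by
  rw [NN_of_coprime hg hχ ht hF hn hi₀ ha,
    traceFiberSum_of_finrank_eq_three_mul_add_two _ hχ (mul_ne_zero ha (inv_ne_zero hF))
      ((finrank_frobeniusFixedField ht).trans htk),
    MulChar.inv_apply', inv_neg, mul_inv, inv_inv, neg_mul, mul_comm _ a⁻¹,
    mul_left_comm, re_neg_one_pow_mul, mul_comm (χ g ^ _), htk, pow_succ (-1 : ℂ) (3 * k + 1)]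
  ring

theorem NN_of_coprime_of_mod_three_eq_zero (hg : ∀ u : Fˣ, u ∈ Subgroup.zpowers g)
    (hχ : orderOf χ = 3) (ht : t ∣ finrank F K) (hF : ((finrank F K / t : ℕ) : F) ≠ 0)
    (hn : (finrank F K / t).Coprime 3) (hi₀ : finrank F K / t * i₀ ≡ h [MOD 3]) (ha : a ≠ 0)
    (htk : t = 3 * k + 3) :
    (NN F K g 3 h t a : ℂ) = 1 / 3 * ((Fintype.card F : ℂ) ^ (t - 1) +
      2 * (-1) ^ t * (Fintype.card F : ℂ) ^ k *
        ((jacobiSum χ χ ^ (k + 1) * χ g ^ (2 * i₀)).re : ℂ)) := by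
  rw [NN_of_coprime hg hχ ht hF hn hi₀ ha,
    traceFiberSum_of_finrank_eq_three_mul_add_three _ hχ (mul_ne_zero ha (inv_ne_zero hF))
      ((finrank_frobeniusFixedField ht).trans htk),
    mul_left_comm, re_neg_one_pow_mul, mul_comm (χ g ^ _), mul_assoc (_ ^ k),
    ← Complex.ofReal_natCast, ← Complex.ofReal_pow _ k, Complex.re_ofReal_mul, htk]
  push_cast
  ring

theorem NN_of_dvd {s : ℕ} (hg : ∀ u : Fˣ, u ∈ Subgroup.zpowers g) (hs : s ∣ orderOf g)
    (ht : t ∣ finrank F K) (hF : ((finrank F K / t : ℕ) : F) ≠ 0) (hn : s ∣ finrank F K / t)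
    (hh : s ∣ h) (ha : a ≠ 0) : NN F K g s h t a = Fintype.card F ^ (t - 1) := by
  rw [NN_eq_card_frobeniusFixedField ht hF, card_trace_norm_pow_of_dvd _ hg hs hn hh
    (mul_ne_zero ha (inv_ne_zero hF)), finrank_frobeniusFixedField ht]

theorem stmt15_general {m d l : ℕ} (ht : t ∣ m) (hK : Fintype.card K = Fintype.card F ^ m)
    (hg : ∀ u : Fˣ, u ∈ Subgroup.zpowers g) (hχ : orderOf χ = 3)
    (hd : d = Nat.gcd (m / t) 3) (hl : l = Nat.gcd t (3 / d)) (hF : ((m / t : ℕ) : F) ≠ 0)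
    (hdh : d ∣ h) (hi₀ : m / (d * t) * i₀ ≡ h / d [MOD 3 / d]) (ha : a ≠ 0)
    {a₀ : F} (ha₀ : a₀ = -((m / t : ℕ) : F) * a⁻¹) :
    (d = 1 ∧ l = 1 ∧ t % 3 = 1 →
      (NN F K g 3 h t a : ℂ) = 1 / 3 * ((Fintype.card F : ℂ) ^ (t - 1) - 2 * (-1) ^ t *
        ((Fintype.card F ^ ((t - 1) / 3) * jacobiSum χ χ ^ ((t - 1) / 3) * χ⁻¹ a₀ *
          χ g ^ (2 * i₀)).re : ℂ))) ∧
    (d = 1 ∧ l = 1 ∧ t % 3 = 2 →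
      (NN F K g 3 h t a : ℂ) = 1 / 3 * ((Fintype.card F : ℂ) ^ (t - 1) - 2 * (-1) ^ t *
        ((Fintype.card F ^ ((t - 2) / 3) * jacobiSum χ χ ^ ((t + 1) / 3) * χ a₀ *
          χ g ^ (2 * i₀)).re : ℂ))) ∧
    (d = 1 ∧ l = 3 →
      (NN F K g 3 h t a : ℂ) = 1 / 3 * ((Fintype.card F : ℂ) ^ (t - 1) +
        2 * (-1) ^ t * (Fintype.card F : ℂ) ^ ((t - 3) / 3) *
          ((jacobiSum χ χ ^ (t / 3) * χ g ^ (2 * i₀)).re : ℂ))) ∧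
    (d = 3 ∧ l = 1 → (NN F K g 3 h t a : ℂ) = (Fintype.card F : ℂ) ^ (t - 1)) := by
  obtain rfl : m = finrank F K := Nat.pow_right_injective Fintype.one_lt_card
    (hK.symm.trans card_eq_pow_finrank)
  subst ha₀
  have hcop (hd1 : d = 1) : (finrank F K / t).Coprime 3 := hd.symm.trans hd1
  have hmod (hd1 : d = 1) : finrank F K / t * i₀ ≡ h [MOD 3] := by
    simpa only [hd1, one_mul, Nat.div_one] using hi₀
  have ht0 : 0 < t := Nat.pos_of_dvd_of_pos ht finrank_pos
  refine ⟨fun ⟨hd1, _, ht1⟩ => ?_, fun ⟨hd1, _, ht2⟩ => ?_, fun ⟨hd1, hl3⟩ => ?_,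
    fun ⟨hd3, _⟩ => ?_⟩
  · have htk : t = 3 * (t / 3) + 1 := ht1 ▸ (Nat.div_add_mod t 3).symm
    rw [show (t - 1) / 3 = t / 3 by omega]
    exact NN_of_coprime_of_mod_three_eq_one hg hχ ht hF (hcop hd1) (hmod hd1) ha htk
  · have htk : t = 3 * (t / 3) + 2 := ht2 ▸ (Nat.div_add_mod t 3).symm
    rw [show (t - 2) / 3 = t / 3 by omega, show (t + 1) / 3 = t / 3 + 1 by omega]
    exact NN_of_coprime_of_mod_three_eq_two hg hχ ht hF (hcop hd1) (hmod hd1) ha htk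
  · have h3t : 3 ∣ t := hl3 ▸ hl ▸ Nat.gcd_dvd_left t (3 / d)
    rw [show t / 3 = (t - 3) / 3 + 1 by omega]
    exact NN_of_coprime_of_mod_three_eq_zero hg hχ ht hF (hcop hd1) (hmod hd1) ha (by omega)
  · exact_mod_cast NN_of_dvd hg (hχ ▸ orderOf_mulChar_dvd hg χ) ht hF
      (hd3 ▸ hd ▸ Nat.gcd_dvd_left _ 3) (hd3 ▸ hdh) ha

end MainTheorem

/-- The values of `N_t` for `s = 3`, `q = p ≡ 1 (mod 3)` and `a ≠ 0`, assuming
`p ∤ m/t` and `d ∣ h`, in terms of `π_3 = χ_3(2)·(a_3 + i·b_3·√3)`, `ζ = e^{2πi/3}`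
and `Q_{t,3}`. -/
theorem stmt15 (p m h t d l i0 : ℕ) [Fact p.Prime] (hm : 2 ≤ m)
    (ht : t ∣ m) (ht0 : 0 < t)
    (K : Type*) [Field K] [Fintype K] [Algebra (ZMod p) K]
    (hK : Fintype.card K = p ^ m)
    (hp : p % 3 = 1)
    (g : (ZMod p)ˣ) (hg : ∀ u : (ZMod p)ˣ, u ∈ Subgroup.zpowers g)
    (hh : h < 3)
    (ζ : ℂ) (hζ : ζ = Complex.exp (2 * Real.pi * Complex.I / 3))
    (χ3 : MulChar (ZMod p) ℂ) (hχ3o : orderOf χ3 = 3) (hχ3g : χ3 (g : ZMod p) = ζ)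
    (a3 b3 : ℤ) (hab : a3 ^ 2 + 3 * b3 ^ 2 = (p : ℤ))
    (ha3 : a3 ≡ -1 [ZMOD 3])
    (hb3 : ((3 * b3 : ℤ) : ZMod p) = (2 * (g : ZMod p) ^ ((p - 1) / 3) + 1) * (a3 : ZMod p))
    (π3 : ℂ) (hπ3 : π3 = χ3 (2 : ZMod p) * ((a3 : ℂ) + Complex.I * (b3 : ℂ) * (Real.sqrt 3 : ℂ)))
    (hd : d = Nat.gcd (m / t) 3) (hl : l = Nat.gcd t (3 / d))
    (hpmt : ¬ p ∣ m / t) (hdh : d ∣ h)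
    (hi0 : i0 < 3 / d ∧ (m / (d * t)) * i0 ≡ h / d [MOD 3 / d])
    (a : ZMod p) (ha : a ≠ 0)
    (a0 : ZMod p) (ha0 : a0 = -(((m / t : ℕ) : ZMod p)) * a⁻¹) :
    (d = 1 ∧ l = 1 ∧ t % 3 = 1 →
      (NN (ZMod p) K (g : ZMod p) 3 h t a : ℂ) =
        (1 / 3) * ((p : ℂ) ^ (t - 1) - 2 * (-1 : ℂ) ^ t *
          (((p : ℂ) ^ ((t - 1) / 3) * π3 ^ ((t - 1) / 3) * χ3⁻¹ a0 * ζ ^ (2 * i0)).re : ℂ))) ∧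
    (d = 1 ∧ l = 1 ∧ t % 3 = 2 →
      (NN (ZMod p) K (g : ZMod p) 3 h t a : ℂ) =
        (1 / 3) * ((p : ℂ) ^ (t - 1) - 2 * (-1 : ℂ) ^ t *
          (((p : ℂ) ^ ((t - 2) / 3) * π3 ^ ((t + 1) / 3) * χ3 a0 * ζ ^ (2 * i0)).re : ℂ))) ∧
    (d = 1 ∧ l = 3 →
      (NN (ZMod p) K (g : ZMod p) 3 h t a : ℂ) =
        (1 / 3) * ((p : ℂ) ^ (t - 1) + 2 * (-1 : ℂ) ^ t * (p : ℂ) ^ ((t - 3) / 3) *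
          ((π3 ^ (t / 3) * ζ ^ (2 * i0)).re : ℂ))) ∧
    (d = 3 ∧ l = 1 →
      (NN (ZMod p) K (g : ZMod p) 3 h t a : ℂ) = (p : ℂ) ^ (t - 1)) := by
  have hF : ((m / t : ℕ) : ZMod p) ≠ 0 := by rwa [Ne, ZMod.natCast_eq_zero_iff]
  have hJ : jacobiSum χ3 χ3 = π3 :=
    hπ3 ▸ jacobiSum_eq_of_sq_add_three_mul_sq hg hχ3o (hχ3g.trans hζ) hab ha3 hb3
  simpa only [ZMod.card, hJ, hχ3g] using stmt15_general (K := K) ht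
    (by rwa [ZMod.card]) hg hχ3o hd hl hF hdh hi0.2 ha ha0

end
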